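/- Let j, k ∈ {0,1} and let a, d, e, f be integers, and set b := ad − 1. Let G be the group with presentation on generators α₁, β₁, α₂, β₂, m and relations α₁⁻¹mα₁ = m⁻¹, α₂⁻¹mα₂ = m⁻¹, β₁m = mβ₁, β₂m = mβ₂, α₁β₁α₁⁻¹β₁⁻¹ = m^j, α₂β₂α₂⁻¹β₂⁻¹ = m^k, α₁² = α₂^{2a}β₂m^e, β₁ = α₂^{2b}β₂^{d}m^f. Let H be the group with presentation on generators α₁, α₂, m, σ and relations mσ = σm, α₁α₂α₁⁻¹α₂⁻¹ = σ, α₁⁻¹mα₁ = m⁻¹, α₁⁻¹σα₁ = m^{k−2e}σ⁻¹, α₂⁻¹mα₂ = m⁻¹, α₂⁻¹σα₂ = m^{j+2(f−de)}σ⁻¹. Then there is a group isomorphism θ : H → G with θ(α₁) = α₁, θ(α₂) = α₂, θ(m) = m, and θ(σ) = α₁α₂α₁⁻¹α₂⁻¹. -/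

import Mathlib

/-- Generators `α₁`, `β₁`, `α₂`, `β₂`, `m` of the glued group `G`. -/
inductive GlueGen : Type
  | a1 : GlueGen  -- α₁
  | b1 : GlueGen  -- β₁
  | a2 : GlueGen  -- α₂
  | b2 : GlueGen  -- β₂
  | m : GlueGen   -- m

open FreeGroup in
/-- The relators of the presentation (c-odd) of the paper, with `b = ad − 1`:
`α₁⁻¹mα₁ = m⁻¹`, `α₂⁻¹mα₂ = m⁻¹`, `β₁m = mβ₁`, `β₂m = mβ₂`, `α₁β₁α₁⁻¹β₁⁻¹ = m^j`,
`α₂β₂α₂⁻¹β₂⁻¹ = m^k`, `α₁² = α₂^{2a}β₂m^e`, `β₁ = α₂^{2b}β₂^{d}m^f`. -/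
def cOddRels (j k a d e f : ℤ) : Set (FreeGroup GlueGen) :=
  { (of GlueGen.a1)⁻¹ * of GlueGen.m * of GlueGen.a1 * of GlueGen.m,
    (of GlueGen.a2)⁻¹ * of GlueGen.m * of GlueGen.a2 * of GlueGen.m,
    of GlueGen.b1 * of GlueGen.m * (of GlueGen.b1)⁻¹ * (of GlueGen.m)⁻¹,
    of GlueGen.b2 * of GlueGen.m * (of GlueGen.b2)⁻¹ * (of GlueGen.m)⁻¹,
    of GlueGen.a1 * of GlueGen.b1 * (of GlueGen.a1)⁻¹ * (of GlueGen.b1)⁻¹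
      * (of GlueGen.m) ^ (-j),
    of GlueGen.a2 * of GlueGen.b2 * (of GlueGen.a2)⁻¹ * (of GlueGen.b2)⁻¹
      * (of GlueGen.m) ^ (-k),
    (of GlueGen.a1) ^ 2
      * ((of GlueGen.a2) ^ (2 * a) * of GlueGen.b2 * (of GlueGen.m) ^ e)⁻¹,
    of GlueGen.b1
      * ((of GlueGen.a2) ^ (2 * (a * d - 1)) * (of GlueGen.b2) ^ d
          * (of GlueGen.m) ^ f)⁻¹ }

/-- Generators `α₁`, `α₂`, `m`, `σ` of the torus-bundle group `H`. -/
inductive TBGen : Type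
  | a1 : TBGen  -- α₁
  | a2 : TBGen  -- α₂
  | m : TBGen   -- m
  | s : TBGen   -- σ

open FreeGroup in
/-- The relators of the presentation of the fundamental group of the torus bundle
`M((−1, k−2e; 0, −1), (−1, j+2(f−de); 0, −1); (0, 1))`:
`mσ = σm`, `α₁α₂α₁⁻¹α₂⁻¹ = σ`, `α₁⁻¹mα₁ = m⁻¹`, `α₁⁻¹σα₁ = m^{k−2e}σ⁻¹`,
`α₂⁻¹mα₂ = m⁻¹`, `α₂⁻¹σα₂ = m^{j+2(f−de)}σ⁻¹`. -/
def torusBundleRelsOdd (j k d e f : ℤ) : Set (FreeGroup TBGen) :=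
  { of TBGen.m * of TBGen.s * (of TBGen.m)⁻¹ * (of TBGen.s)⁻¹,
    of TBGen.a1 * of TBGen.a2 * (of TBGen.a1)⁻¹ * (of TBGen.a2)⁻¹ * (of TBGen.s)⁻¹,
    (of TBGen.a1)⁻¹ * of TBGen.m * of TBGen.a1 * of TBGen.m,
    (of TBGen.a1)⁻¹ * of TBGen.s * of TBGen.a1
      * ((of TBGen.m) ^ (k - 2 * e) * (of TBGen.s)⁻¹)⁻¹,
    (of TBGen.a2)⁻¹ * of TBGen.m * of TBGen.a2 * of TBGen.m,
    (of TBGen.a2)⁻¹ * of TBGen.s * of TBGen.a2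
      * ((of TBGen.m) ^ (j + 2 * (f - d * e)) * (of TBGen.s)⁻¹)⁻¹ }

/-- Elements `x`, `y`, `m` of a group such that `x` and `y` invert `m`, and such that `y` and `x`
act by conjugation on `x ^ 2` and `y ^ 2` through multiplication by `m ^ K` and `m ^ (-N)`. -/
structure TwistedSquares {Γ : Type*} [Group Γ] (K N : ℤ) (x y m : Γ) : Prop where
  inv_left : SemiconjBy x m m⁻¹
  inv_right : SemiconjBy y m m⁻¹
  sq_left : SemiconjBy y (x ^ 2) (m ^ K * x ^ 2)
  sq_right : SemiconjBy x (y ^ 2) (m ^ (-N) * y ^ 2)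

section

variable {Γ : Type*} [Group Γ] {x y m : Γ}

lemma semiconjBy_inv_of_relator (h : x⁻¹ * m * x * m = 1) : SemiconjBy x m m⁻¹ := by
  have h' : x⁻¹ * m * x = m⁻¹ := eq_inv_of_mul_eq_one_left h
  have h₂ : SemiconjBy x m⁻¹ m := by
    rw [← h']
    simp [SemiconjBy, mul_assoc]
  simpa using h₂.inv_right

lemma relator_of_semiconjBy_inv (h : SemiconjBy x m m⁻¹) : x⁻¹ * m * x * m = 1 := by
  rw [mul_assoc _ x m, h.eq]
  group

lemma SemiconjBy.commute_sq_of_inv (h : SemiconjBy x m m⁻¹) : Commute (x ^ 2) m := by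
  have h₂ : SemiconjBy x m⁻¹ m := by simpa using h.inv_right
  rw [pow_two]
  exact h₂.mul_left h

lemma SemiconjBy.zpow_of_inv (h : SemiconjBy x m m⁻¹) (n : ℤ) :
    SemiconjBy x (m ^ n) (m ^ n)⁻¹ := by
  simpa using h.zpow_right n

/-- Normal forms in the subgroup generated by commuting elements multiply by adding exponents. -/
lemma commuting_zpow_mul {u v w : Γ} (huv : Commute u v) (huw : Commute u w) (hvw : Commute v w)
    (p q r p' q' r' : ℤ) :
    (u ^ p * v ^ q * w ^ r) * (u ^ p' * v ^ q' * w ^ r')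
      = u ^ (p + p') * v ^ (q + q') * w ^ (r + r') := by
  have h₁ : Commute (w ^ r) (u ^ p' * v ^ q') :=
    ((huw.symm.zpow_zpow r p')).mul_right (hvw.symm.zpow_zpow r q')
  have h₂ : Commute (v ^ q) (u ^ p') := huv.symm.zpow_zpow q p'
  calc _ = u ^ p * v ^ q * (w ^ r * (u ^ p' * v ^ q')) * w ^ r' := by simp only [mul_assoc]
    _ = u ^ p * (v ^ q * u ^ p') * v ^ q' * (w ^ r * w ^ r') := by
      rw [h₁.eq]; simp only [mul_assoc]
    _ = _ := by rw [h₂.eq]; simp only [zpow_add, mul_assoc]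

lemma commuting_zpow_zpow {u v w : Γ} (huv : Commute u v) (huw : Commute u w)
    (hvw : Commute v w) (p q r n : ℤ) :
    (u ^ p * v ^ q * w ^ r) ^ n = u ^ (p * n) * v ^ (q * n) * w ^ (r * n) := by
  have h₁ : Commute (u ^ p * v ^ q) (w ^ r) :=
    (huw.zpow_zpow p r).mul_left (hvw.zpow_zpow q r)
  rw [h₁.mul_zpow, (huv.zpow_zpow p q).mul_zpow]
  simp only [zpow_mul]

lemma commutator_conj_left_iff {c : Γ} (hx : SemiconjBy x c c⁻¹) (hy : SemiconjBy y c c⁻¹) :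
    x⁻¹ * (x * y * x⁻¹ * y⁻¹) * x * (x * y * x⁻¹ * y⁻¹) = c
      ↔ SemiconjBy y (x ^ 2) (c * x ^ 2) := by
  have hy' : y * c⁻¹ = c * y := by simpa using hy.inv_right.eq
  have hx' : x * c⁻¹ = c * x := by simpa using hx.inv_right.eq
  have hc : c = y * x⁻¹ * (c * x ^ 2) * x⁻¹ * y⁻¹ := by
    rw [pow_two, ← mul_assoc c x x, ← hx']
    simp only [mul_assoc, inv_mul_cancel_left, mul_inv_cancel_left]
    rw [← mul_assoc, hy']
    simp
  have key : x⁻¹ * (x * y * x⁻¹ * y⁻¹) * x * (x * y * x⁻¹ * y⁻¹)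
      = y * x⁻¹ * (y⁻¹ * x ^ 2 * y) * x⁻¹ * y⁻¹ := by
    simp only [pow_two]; group
  have hcy : c * (y * (c * x ^ 2)) = y * x ^ 2 := by
    rw [← mul_assoc y, hy.eq]; simp [mul_assoc]
  rw [key]
  conv_lhs => rw [hc]
  simp only [mul_left_inj, mul_right_inj]
  rw [mul_assoc, inv_mul_eq_iff_eq_mul, SemiconjBy, mul_assoc c, ← hcy, mul_right_inj]
  exact eq_comm

lemma commutator_conj_right_iff {c : Γ} (hy : SemiconjBy y c c⁻¹) :
    y⁻¹ * (x * y * x⁻¹ * y⁻¹) * y * (x * y * x⁻¹ * y⁻¹) = c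
      ↔ SemiconjBy x (y ^ 2) (c⁻¹ * y ^ 2) := by
  have hc : c = y⁻¹ * (c⁻¹ * y ^ 2) * y⁻¹ := by
    rw [pow_two, ← mul_assoc c⁻¹ y y, ← hy.eq]
    simp [mul_assoc]
  have key : y⁻¹ * (x * y * x⁻¹ * y⁻¹) * y * (x * y * x⁻¹ * y⁻¹)
      = y⁻¹ * (x * y ^ 2 * x⁻¹) * y⁻¹ := by
    simp only [pow_two]; group
  rw [key]
  conv_lhs => rw [hc]
  simp only [mul_left_inj, mul_right_inj]
  rw [mul_inv_eq_iff_eq_mul, SemiconjBy]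

/-- The relators of the torus bundle group hold once `s` is the commutator of `x` and `y`. -/
lemma TwistedSquares.commutator_relators {K N : ℤ} (h : TwistedSquares K N x y m) :
    m * (x * y * x⁻¹ * y⁻¹) * m⁻¹ * (x * y * x⁻¹ * y⁻¹)⁻¹ = 1 ∧
      x⁻¹ * (x * y * x⁻¹ * y⁻¹) * x * (m ^ K * (x * y * x⁻¹ * y⁻¹)⁻¹)⁻¹ = 1 ∧
      y⁻¹ * (x * y * x⁻¹ * y⁻¹) * y * (m ^ N * (x * y * x⁻¹ * y⁻¹)⁻¹)⁻¹ = 1 := by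
  have hx' : SemiconjBy x m⁻¹ m := by simpa using h.inv_left.inv_right
  have hy' : SemiconjBy y m⁻¹ m := by simpa using h.inv_right.inv_right
  have hs : Commute (x * y * x⁻¹ * y⁻¹) m :=
    ((hx'.mul_left h.inv_right).mul_left (SemiconjBy.inv_symm_left_iff.mpr h.inv_left)).mul_left
      (SemiconjBy.inv_symm_left_iff.mpr hy')
  refine ⟨?_, ?_, ?_⟩
  · rw [← hs.eq]; group
  · rw [mul_inv_rev, inv_inv, ← mul_assoc, mul_inv_eq_one]
    exact (commutator_conj_left_iff (h.inv_left.zpow_of_inv K) (h.inv_right.zpow_of_inv K)).mpr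
      h.sq_left
  · rw [mul_inv_rev, inv_inv, ← mul_assoc, mul_inv_eq_one]
    exact (commutator_conj_right_iff (h.inv_right.zpow_of_inv N)).mpr
      (by simpa using h.sq_right)

lemma twistedSquares_of_torusBundle_relators {K N : ℤ} {s : Γ}
    (hs : x * y * x⁻¹ * y⁻¹ * s⁻¹ = 1) (hx : x⁻¹ * m * x * m = 1)
    (hxs : x⁻¹ * s * x * (m ^ K * s⁻¹)⁻¹ = 1) (hy : y⁻¹ * m * y * m = 1)
    (hys : y⁻¹ * s * y * (m ^ N * s⁻¹)⁻¹ = 1) : TwistedSquares K N x y m := by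
  have hxm := semiconjBy_inv_of_relator hx
  have hym := semiconjBy_inv_of_relator hy
  obtain rfl := mul_inv_eq_one.mp hs
  rw [mul_inv_rev, inv_inv, ← mul_assoc, mul_inv_eq_one] at hxs hys
  refine ⟨hxm, hym, ?_, ?_⟩
  · exact (commutator_conj_left_iff (hxm.zpow_of_inv K) (hym.zpow_of_inv K)).mp hxs
  · simpa using (commutator_conj_right_iff (hym.zpow_of_inv N)).mp hys

lemma TwistedSquares.commute_sq {K N : ℤ} (h : TwistedSquares K N x y m) :
    Commute (x ^ 2) (y ^ 2) := by
  have h₁ : SemiconjBy y (m ^ K * x ^ 2) (x ^ 2) := by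
    simpa using (h.inv_right.zpow_right K).mul_right h.sq_left
  have h₂ := h₁.mul_left h.sq_left
  rw [← pow_two] at h₂
  exact Commute.symm h₂

lemma TwistedSquares.semiconj_left {K N : ℤ} (h : TwistedSquares K N x y m) (p q r : ℤ) :
    SemiconjBy x (m ^ p * (x ^ 2) ^ q * (y ^ 2) ^ r)
      (m ^ (-p - N * r) * (x ^ 2) ^ q * (y ^ 2) ^ r) := by
  have hu := h.inv_left.commute_sq_of_inv
  have hv := h.inv_right.commute_sq_of_inv
  have h₁ : SemiconjBy x (x ^ 2) (x ^ 2) := (Commute.refl x).pow_right 2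
  have h₂ := ((h.inv_left.zpow_right p).mul_right (h₁.zpow_right q)).mul_right
    (h.sq_right.zpow_right r)
  have h₃ := commuting_zpow_mul hu.symm hv.symm h.commute_sq (-p) q 0 (-N * r) 0 r
  rw [(hv.symm.zpow_left (-N)).mul_zpow, ← zpow_mul, inv_zpow'] at h₂
  refine (congrArg (SemiconjBy _ _) ?_).mpr h₂
  simpa [sub_eq_add_neg] using h₃.symm

lemma TwistedSquares.semiconj_right {K N : ℤ} (h : TwistedSquares K N x y m) (p q r : ℤ) :
    SemiconjBy y (m ^ p * (x ^ 2) ^ q * (y ^ 2) ^ r)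
      (m ^ (-p + K * q) * (x ^ 2) ^ q * (y ^ 2) ^ r) := by
  have hu := h.inv_left.commute_sq_of_inv
  have h₁ : SemiconjBy y (y ^ 2) (y ^ 2) := (Commute.refl y).pow_right 2
  have h₂ := ((h.inv_right.zpow_right p).mul_right (h.sq_left.zpow_right q)).mul_right
    (h₁.zpow_right r)
  rw [(hu.symm.zpow_left K).mul_zpow, ← zpow_mul, inv_zpow', ← mul_assoc, ← zpow_add] at h₂
  exact h₂

/-- The relators of the glued group, when `b₁` and `b₂` are in normal form. -/
lemma TwistedSquares.glue_relators {j k a d e f : ℤ} {b₁ b₂ : Γ}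
    (h : TwistedSquares (k - 2 * e) (j + 2 * (f - d * e)) x y m)
    (hb₁ : b₁ = m ^ (f - d * e) * (x ^ 2) ^ d * (y ^ 2) ^ (-1 : ℤ))
    (hb₂ : b₂ = m ^ (-e) * (x ^ 2) ^ (1 : ℤ) * (y ^ 2) ^ (-a)) :
    b₁ * m * b₁⁻¹ * m⁻¹ = 1 ∧ b₂ * m * b₂⁻¹ * m⁻¹ = 1 ∧
      x * b₁ * x⁻¹ * b₁⁻¹ * m ^ (-j) = 1 ∧ y * b₂ * y⁻¹ * b₂⁻¹ * m ^ (-k) = 1 ∧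
      x ^ 2 * (y ^ (2 * a) * b₂ * m ^ e)⁻¹ = 1 ∧
      b₁ * (y ^ (2 * (a * d - 1)) * b₂ ^ d * m ^ f)⁻¹ = 1 := by
  have hu := h.inv_left.commute_sq_of_inv
  have hv := h.inv_right.commute_sq_of_inv
  have huv := h.commute_sq
  have hmul := commuting_zpow_mul hu.symm hv.symm huv
  have hcomm (p q r : ℤ) : Commute (m ^ p * (x ^ 2) ^ q * (y ^ 2) ^ r) m :=
    (((Commute.refl m).zpow_left p).mul_left (hu.zpow_left q)).mul_left (hv.zpow_left r)
  have hm (n : ℤ) : m ^ n = m ^ n * (x ^ 2) ^ (0 : ℤ) * (y ^ 2) ^ (0 : ℤ) := by simp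
  have hy (n : ℤ) : y ^ (2 * n) = m ^ (0 : ℤ) * (x ^ 2) ^ (0 : ℤ) * (y ^ 2) ^ n := by
    rw [zpow_mul]; simp [zpow_ofNat]
  have hx : x ^ 2 = m ^ (0 : ℤ) * (x ^ 2) ^ (1 : ℤ) * (y ^ 2) ^ (0 : ℤ) := by simp
  have hrel {g b c : Γ} {n : ℤ} (hg : g * b = c * g) (hc : c = m ^ n * b) :
      g * b * g⁻¹ * b⁻¹ * m ^ (-n) = 1 := by
    rw [hg, hc]; simp
  refine ⟨?_, ?_, ?_, ?_, ?_, ?_⟩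
  · rw [hb₁, (hcomm _ _ _).eq]; group
  · rw [hb₂, (hcomm _ _ _).eq]; group
  · refine hrel (hb₁ ▸ (h.semiconj_left _ _ _).eq) ?_
    rw [hb₁, hm j, hmul]
    congr 3 <;> ring
  · refine hrel (hb₂ ▸ (h.semiconj_right _ _ _).eq) ?_
    rw [hb₂, hm k, hmul]
    congr 3 <;> ring
  · rw [mul_inv_eq_one, hb₂, hy, hm e, hmul, hmul]
    conv_lhs => rw [hx]
    congr 3 <;> ring
  · rw [mul_inv_eq_one, hb₁, hb₂, commuting_zpow_zpow hu.symm hv.symm huv, hy, hm f, hmul, hmul]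
    congr 3 <;> ring

/-- The relators of the glued group force the normal forms of `b₁` and `b₂`. -/
lemma twistedSquares_of_glue_relators {j k a d e f : ℤ} {b₁ b₂ : Γ}
    (hx : x⁻¹ * m * x * m = 1) (hy : y⁻¹ * m * y * m = 1)
    (hxb : x * b₁ * x⁻¹ * b₁⁻¹ * m ^ (-j) = 1) (hyb : y * b₂ * y⁻¹ * b₂⁻¹ * m ^ (-k) = 1)
    (hxx : x ^ 2 * (y ^ (2 * a) * b₂ * m ^ e)⁻¹ = 1)
    (hb : b₁ * (y ^ (2 * (a * d - 1)) * b₂ ^ d * m ^ f)⁻¹ = 1) :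
    TwistedSquares (k - 2 * e) (j + 2 * (f - d * e)) x y m ∧
      b₁ = m ^ (f - d * e) * (x ^ 2) ^ d * (y ^ 2) ^ (-1 : ℤ) ∧
      b₂ = m ^ (-e) * (x ^ 2) ^ (1 : ℤ) * (y ^ 2) ^ (-a) := by
  have hxm := semiconjBy_inv_of_relator hx
  have hym := semiconjBy_inv_of_relator hy
  have hu := hxm.commute_sq_of_inv
  have hv := hym.commute_sq_of_inv
  have hyb' : SemiconjBy y b₂ (m ^ k * b₂) := by
    rw [zpow_neg, mul_inv_eq_one, mul_inv_eq_iff_eq_mul, mul_inv_eq_iff_eq_mul] at hyb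
    exact hyb
  have hxb' : SemiconjBy x b₁ (m ^ j * b₁) := by
    rw [zpow_neg, mul_inv_eq_one, mul_inv_eq_iff_eq_mul, mul_inv_eq_iff_eq_mul] at hxb
    exact hxb
  rw [mul_inv_eq_one] at hxx hb
  have hsq (n : ℤ) : y ^ (2 * n) = (y ^ 2) ^ n := by rw [zpow_mul]; simp [zpow_ofNat]
  rw [hsq] at hxx hb
  have hvb : Commute (y ^ 2) b₂ := by
    have h₁ : SemiconjBy y (m ^ k * b₂) b₂ := by
      simpa using (hym.zpow_right k).mul_right hyb'
    have h₂ := h₁.mul_left hyb'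
    rwa [← pow_two] at h₂
  have huv : Commute (x ^ 2) (y ^ 2) := by
    rw [hxx]
    exact (((Commute.refl (y ^ 2)).zpow_left a).mul_left hvb.symm).mul_left
      (hv.symm.zpow_left e)
  have hmul := commuting_zpow_mul hu.symm hv.symm huv
  have hm (n : ℤ) : m ^ n = m ^ n * (x ^ 2) ^ (0 : ℤ) * (y ^ 2) ^ (0 : ℤ) := by simp
  have hy' (n : ℤ) : (y ^ 2) ^ n = m ^ (0 : ℤ) * (x ^ 2) ^ (0 : ℤ) * (y ^ 2) ^ n := by simp
  have hb₂ : b₂ = m ^ (-e) * (x ^ 2) ^ (1 : ℤ) * (y ^ 2) ^ (-a) := by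
    have h₁ : b₂ = (y ^ 2) ^ (-a) * x ^ 2 * m ^ (-e) := by rw [hxx]; group
    have h₂ := hmul 0 0 (-a) 0 1 0
    have h₃ := hmul 0 1 (-a) (-e) 0 0
    simp only [zpow_zero, one_mul, mul_one, zero_add, add_zero, zpow_one] at h₂ h₃ ⊢
    rw [h₁, h₂, h₃]
  have hb₁ : b₁ = m ^ (f - d * e) * (x ^ 2) ^ d * (y ^ 2) ^ (-1 : ℤ) := by
    rw [hb, hb₂, commuting_zpow_zpow hu.symm hv.symm huv, hy' (a * d - 1), hm f, hmul, hmul]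
    congr 3 <;> ring
  have hxx' : SemiconjBy x (x ^ 2) (x ^ 2) := (Commute.refl x).pow_right 2
  have hyy' : SemiconjBy y (y ^ 2) (y ^ 2) := (Commute.refl y).pow_right 2
  refine ⟨⟨hxm, hym, ?_, ?_⟩, hb₁, hb₂⟩
  · have h₁ : x ^ 2 = b₂ * m ^ e * (y ^ 2) ^ a := by
      rw [hb₂, hm e, hy' a, hmul, hmul]; simp
    have h₂ := (hyb'.mul_right (hym.zpow_right e)).mul_right (hyy'.zpow_right a)
    rw [← h₁] at h₂
    refine (congrArg (SemiconjBy _ _) ?_).mpr h₂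
    rw [inv_zpow', hm (-e), hm k, hy' a, hb₂, hmul, hmul, hmul]
    simp [show k + -e + -e = k - 2 * e by ring]
  · have h₁ : y ^ 2 = b₁⁻¹ * m ^ (f - d * e) * (x ^ 2) ^ d := by
      rw [mul_assoc, eq_inv_mul_iff_mul_eq, hb₁]
      simp
    have h₂ := (hxb'.inv_right.mul_right (hxm.zpow_right (f - d * e))).mul_right
      (hxx'.zpow_right d)
    rw [← h₁] at h₂
    refine (congrArg (SemiconjBy _ _) ?_).mpr h₂
    have h₃ := hmul (j + (f - d * e)) d (-1) (-(j + 2 * (f - d * e))) 0 1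
    have h₄ := hmul j 0 0 (f - d * e) d (-1)
    have h₅ : m ^ (-(f - d * e)) * (x ^ 2) ^ d = m ^ (j + (f - d * e)
        + -(j + 2 * (f - d * e))) * (x ^ 2) ^ (d + 0) * (y ^ 2) ^ (-1 + 1 : ℤ) := by
      ring_nf; simp
    simp only [zpow_zero, mul_one, zero_add, zpow_one] at h₃ h₄
    rw [mul_assoc, eq_inv_mul_iff_mul_eq, hb₁, inv_zpow', h₄, h₃, h₅]

end

lemma forall_torusBundleRelsOdd_iff {Γ : Type*} [Group Γ] (φ : FreeGroup TBGen →* Γ)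
    (j k d e f : ℤ) {x y m s : Γ} (hx : φ (.of .a1) = x) (hy : φ (.of .a2) = y)
    (hm : φ (.of .m) = m) (hs : φ (.of .s) = s) :
    (∀ r ∈ torusBundleRelsOdd j k d e f, φ r = 1) ↔
      m * s * m⁻¹ * s⁻¹ = 1 ∧ x * y * x⁻¹ * y⁻¹ * s⁻¹ = 1 ∧ x⁻¹ * m * x * m = 1 ∧
      x⁻¹ * s * x * (m ^ (k - 2 * e) * s⁻¹)⁻¹ = 1 ∧ y⁻¹ * m * y * m = 1 ∧
      y⁻¹ * s * y * (m ^ (j + 2 * (f - d * e)) * s⁻¹)⁻¹ = 1 := by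
  simp only [torusBundleRelsOdd, Set.mem_insert_iff, Set.mem_singleton_iff, forall_eq_or_imp,
    forall_eq, map_mul, map_inv, map_zpow, hx, hy, hm, hs]

lemma forall_cOddRels_iff {Γ : Type*} [Group Γ] (φ : FreeGroup GlueGen →* Γ)
    (j k a d e f : ℤ) {x b₁ y b₂ m : Γ} (hx : φ (.of .a1) = x) (hb₁ : φ (.of .b1) = b₁)
    (hy : φ (.of .a2) = y) (hb₂ : φ (.of .b2) = b₂) (hm : φ (.of .m) = m) :
    (∀ r ∈ cOddRels j k a d e f, φ r = 1) ↔
      x⁻¹ * m * x * m = 1 ∧ y⁻¹ * m * y * m = 1 ∧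
      b₁ * m * b₁⁻¹ * m⁻¹ = 1 ∧ b₂ * m * b₂⁻¹ * m⁻¹ = 1 ∧
      x * b₁ * x⁻¹ * b₁⁻¹ * m ^ (-j) = 1 ∧ y * b₂ * y⁻¹ * b₂⁻¹ * m ^ (-k) = 1 ∧
      x ^ 2 * (y ^ (2 * a) * b₂ * m ^ e)⁻¹ = 1 ∧
      b₁ * (y ^ (2 * (a * d - 1)) * b₂ ^ d * m ^ f)⁻¹ = 1 := by
  simp only [cOddRels, Set.mem_insert_iff, Set.mem_singleton_iff, forall_eq_or_imp,
    forall_eq, map_mul, map_inv, map_zpow, map_pow, hx, hb₁, hy, hb₂, hm]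

/-- The group (c-odd) of the paper is isomorphic to the fundamental group of the torus
bundle over the torus `M((−1, k−2e; 0, −1), (−1, j+2(f−de); 0, −1); (0, 1))`, via
`α₁ ↦ α₁`, `α₂ ↦ α₂`, `m ↦ m`, `σ ↦ α₁α₂α₁⁻¹α₂⁻¹`. -/
theorem cOdd_group_is_torus_bundle_group (j k a d e f : ℤ)
    (hj : j = 0 ∨ j = 1) (hk : k = 0 ∨ k = 1) :
    ∃ θ : PresentedGroup (torusBundleRelsOdd j k d e f)
        ≃* PresentedGroup (cOddRels j k a d e f),
      θ (PresentedGroup.of TBGen.a1) = PresentedGroup.of GlueGen.a1 ∧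
      θ (PresentedGroup.of TBGen.a2) = PresentedGroup.of GlueGen.a2 ∧
      θ (PresentedGroup.of TBGen.m) = PresentedGroup.of GlueGen.m ∧
      θ (PresentedGroup.of TBGen.s)
        = PresentedGroup.of GlueGen.a1 * PresentedGroup.of GlueGen.a2
          * (PresentedGroup.of GlueGen.a1 : PresentedGroup (cOddRels j k a d e f))⁻¹
          * (PresentedGroup.of GlueGen.a2 : PresentedGroup (cOddRels j k a d e f))⁻¹ := by
  obtain ⟨-, hs, hxm, hxs, hym, hys⟩ :=
    (forall_torusBundleRelsOdd_iff (PresentedGroup.mk (torusBundleRelsOdd j k d e f)) j k d e f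
      (x := .of .a1) (y := .of .a2) (m := .of .m) (s := .of .s) rfl rfl rfl rfl).mp
      fun _ hr => PresentedGroup.one_of_mem hr
  obtain ⟨gx, gy, -, -, gxb, gyb, gxx, gb⟩ :=
    (forall_cOddRels_iff (PresentedGroup.mk (cOddRels j k a d e f)) j k a d e f (x := .of .a1)
      (b₁ := .of .b1) (y := .of .a2) (b₂ := .of .b2) (m := .of .m) rfl rfl rfl rfl rfl).mp
      fun _ hr => PresentedGroup.one_of_mem hr
  have tH := twistedSquares_of_torusBundle_relators hs hxm hxs hym hys
  obtain ⟨tG, hb₁, hb₂⟩ := twistedSquares_of_glue_relators gx gy gxb gyb gxx gb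
  obtain ⟨c₁, c₂, c₃⟩ := tG.commutator_relators
  obtain ⟨r₁, r₂, r₃, r₄, r₅, r₆⟩ := tH.glue_relators (a := a) rfl rfl
  let φ : TBGen → PresentedGroup (cOddRels j k a d e f)
    | .a1 => .of .a1
    | .a2 => .of .a2
    | .m => .of .m
    | .s => .of .a1 * .of .a2 * (.of .a1)⁻¹ * (.of .a2)⁻¹
  let ψ : GlueGen → PresentedGroup (torusBundleRelsOdd j k d e f)
    | .a1 => .of .a1
    | .b1 => .of .m ^ (f - d * e) * (.of .a1 ^ 2) ^ d * (.of .a2 ^ 2) ^ (-1 : ℤ)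
    | .a2 => .of .a2
    | .b2 => .of .m ^ (-e) * (.of .a1 ^ 2) ^ (1 : ℤ) * (.of .a2 ^ 2) ^ (-a)
    | .m => .of .m
  have hφ : ∀ r ∈ torusBundleRelsOdd j k d e f, FreeGroup.lift φ r = 1 :=
    (forall_torusBundleRelsOdd_iff _ j k d e f FreeGroup.lift_apply_of FreeGroup.lift_apply_of
      FreeGroup.lift_apply_of FreeGroup.lift_apply_of).mpr
      ⟨c₁, mul_inv_cancel _, gx, c₂, gy, c₃⟩
  have hψ : ∀ r ∈ cOddRels j k a d e f, FreeGroup.lift ψ r = 1 :=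
    (forall_cOddRels_iff _ j k a d e f FreeGroup.lift_apply_of FreeGroup.lift_apply_of
      FreeGroup.lift_apply_of FreeGroup.lift_apply_of FreeGroup.lift_apply_of).mpr
      ⟨hxm, hym, r₁, r₂, r₃, r₄, r₅, r₆⟩
  let Φ : PresentedGroup (torusBundleRelsOdd j k d e f) →*
      PresentedGroup (cOddRels j k a d e f) := PresentedGroup.toGroup hφ
  let Ψ : PresentedGroup (cOddRels j k a d e f) →*
      PresentedGroup (torusBundleRelsOdd j k d e f) := PresentedGroup.toGroup hψ
  have hΦ (t) : Φ (.of t) = φ t := PresentedGroup.toGroup.of hφ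
  have hΨ (t) : Ψ (.of t) = ψ t := PresentedGroup.toGroup.of hψ
  have hΨΦ : Ψ.comp Φ = MonoidHom.id _ := by
    refine PresentedGroup.ext fun t => ?_
    cases t <;> simp only [MonoidHom.comp_apply, MonoidHom.id_apply, hΦ, hΨ, φ, ψ, map_mul, map_inv]
    exact mul_inv_eq_one.mp hs
  have hΦΨ : Φ.comp Ψ = MonoidHom.id _ := by
    refine PresentedGroup.ext fun t => ?_
    cases t <;> simp only [MonoidHom.comp_apply, MonoidHom.id_apply, hΦ, hΨ, φ, ψ, map_mul,
      map_zpow, map_pow]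
    · exact hb₁.symm
    · exact hb₂.symm
  exact ⟨Φ.toMulEquiv Ψ hΨΦ hΦΨ, hΦ .a1, hΦ .a2, hΦ .m, hΦ .s⟩
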